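/- For every integer k ≥ 3 and ε = ±1, the Lehmer pair associated with (a,b) = (φ_{k−2ε}, φ_{k−2ε} − 4φ_k) is a 5-defective Lehmer pair; and for every integer k ≥ 0 and ε = ±1 with (k,ε) ∉ {(0,−1), (1,−1)}, the Lehmer pair associated with (a,b) = (ψ_{k−2ε}, ψ_{k−2ε} − 4ψ_k) is a 5-defective Lehmer pair. -/

import Mathlib

open Complex

/-- A fixed choice of complex square root of an integer. -/
noncomputable def csqrt (a : ℤ) : ℂ := (a : ℂ) ^ ((1 : ℂ) / 2)

/-- First component of the Lehmer pair associated with `(a, b)`: `(√a - √b)/2`. -/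
noncomputable def assocFst (a b : ℤ) : ℂ := (csqrt a - csqrt b) / 2

/-- Second component of the Lehmer pair associated with `(a, b)`: `(√a + √b)/2`. -/
noncomputable def assocSnd (a b : ℤ) : ℂ := (csqrt a + csqrt b) / 2

/-- `(α, β)` is a Lehmer pair: `α`, `β` are algebraic integers, `(α+β)^2` and `αβ` are
nonzero coprime rational integers, and `α/β` is not a root of unity. -/
def IsLehmerPair (α β : ℂ) : Prop :=
  IsIntegral ℤ α ∧ IsIntegral ℤ β ∧
  (∃ p q : ℤ, ((α + β) ^ 2 = (p : ℂ)) ∧ (α * β = (q : ℂ)) ∧ p ≠ 0 ∧ q ≠ 0 ∧ IsCoprime p q) ∧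
  ¬ ∃ n : ℕ, 0 < n ∧ (α / β) ^ n = 1

/-- The Lehmer numbers `ũ_n(α, β)`. -/
noncomputable def lehmerU (α β : ℂ) (n : ℕ) : ℂ :=
  if Odd n then (α ^ n - β ^ n) / (α - β) else (α ^ n - β ^ n) / (α ^ 2 - β ^ 2)

/-- `z` is an integer divisible by `ℓ`. -/
def IntDvd (ℓ : ℕ) (z : ℂ) : Prop := ∃ m : ℤ, (m : ℂ) = z ∧ (ℓ : ℤ) ∣ m

/-- `ℓ` is a primitive divisor of `ũ_n(α, β)`: `ℓ` is a prime dividing `ũ_n(α, β)` but not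
dividing `(α^2 - β^2)^2 ũ_1(α,β) ⋯ ũ_{n-1}(α,β)`. -/
def IsPrimitiveDivisor (ℓ : ℕ) (n : ℕ) (α β : ℂ) : Prop :=
  ℓ.Prime ∧ IntDvd ℓ (lehmerU α β n) ∧
  ¬ IntDvd ℓ ((α ^ 2 - β ^ 2) ^ 2 * ∏ i ∈ Finset.Ico 1 n, lehmerU α β i)

/-- `(α, β)` is an `n`-defective Lehmer pair: a Lehmer pair such that `ũ_n(α, β)` has no
primitive divisor. -/
def IsDefective (n : ℕ) (α β : ℂ) : Prop :=
  IsLehmerPair α β ∧ ∀ ℓ : ℕ, ¬ IsPrimitiveDivisor ℓ n α β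

/-- Two Lehmer pairs `(α₁, β₁)` and `(α₂, β₂)` are equivalent if
`α₁/α₂ = β₁/β₂ ∈ {1, -1, i, -i}`. -/
def LehmerEquiv (α₁ β₁ α₂ β₂ : ℂ) : Prop :=
  ∃ c : ℂ, (c = 1 ∨ c = -1 ∨ c = Complex.I ∨ c = -Complex.I) ∧ α₁ = c * α₂ ∧ β₁ = c * β₂

/-- `phiAux n = φ_{n-2}`: the Fibonacci sequence shifted so as to start at index `-2`. -/
def phiAux : ℕ → ℤ
  | 0 => -1
  | 1 => 1
  | n + 2 => phiAux (n + 1) + phiAux n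

/-- `φ_k` for integer `k ≥ -2`: `φ_{-2} = -1`, `φ_{-1} = 1`, `φ_{k+1} = φ_k + φ_{k-1}`. -/
def phi (k : ℤ) : ℤ := phiAux (k + 2).toNat

/-- `psiAux n = ψ_{n-2}`: the Lucas sequence shifted so as to start at index `-2`. -/
def psiAux : ℕ → ℤ
  | 0 => 3
  | 1 => -1
  | n + 2 => psiAux (n + 1) + psiAux n

/-- `ψ_k` for integer `k ≥ -2`: `ψ_{-2} = 3`, `ψ_{-1} = -1`, `ψ_{k+1} = ψ_k + ψ_{k-1}`. -/
def psi (k : ℤ) : ℤ := psiAux (k + 2).toNat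

/-- `piAux n = π_{n-1}`. -/
def piAux : ℕ → ℤ
  | 0 => 1
  | 1 => 0
  | n + 2 => 2 * piAux (n + 1) + piAux n

/-- `π_k` for integer `k ≥ -1`: `π_{-1} = 1`, `π_0 = 0`, `π_{k+1} = 2π_k + π_{k-1}`. -/
def piSeq (k : ℤ) : ℤ := piAux (k + 1).toNat

/-- `rhoAux n = ρ_{n-1}`. -/
def rhoAux : ℕ → ℤ
  | 0 => -1
  | 1 => 1
  | n + 2 => 2 * rhoAux (n + 1) + rhoAux n

/-- `ρ_k` for integer `k ≥ -1`: `ρ_{-1} = -1`, `ρ_0 = 1`, `ρ_{k+1} = 2ρ_k + ρ_{k-1}`. -/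
def rhoSeq (k : ℤ) : ℤ := rhoAux (k + 1).toNat

/-- `zetaAux i n = ζ^{(i)}_{n-1}`. -/
def zetaAux (i : ℕ) : ℕ → ℤ
  | 0 => if i = 0 then -1 else if i = 1 then 2 else if i = 2 then 1 else -1
  | 1 => if i = 0 then 0 else 1
  | n + 2 => 4 * zetaAux i (n + 1) - zetaAux i n

/-- `ζ^{(i)}_k` for integer `k ≥ -1`, satisfying `ζ^{(i)}_{k+1} = 4ζ^{(i)}_k - ζ^{(i)}_{k-1}`
with initial values `(ζ^{(i)}_{-1}, ζ^{(i)}_0)` equal to `(-1, 0)`, `(2, 1)`, `(1, 1)`,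
`(-1, 1)` for `i = 0, 1, 2, 3` respectively. -/
def zeta (i : ℕ) (k : ℤ) : ℤ := zetaAux i (k + 1).toNat

theorem csqrt_sq (a : ℤ) : csqrt a ^ 2 = (a : ℂ) := by
  unfold csqrt
  have := Complex.cpow_nat_inv_pow (a : ℂ) (n := 2) (by norm_num)
  simpa [one_div] using this

theorem int_of_quartic (α : ℂ) (r s : ℤ) (h : α ^ 4 - r * α ^ 2 + s = 0) : IsIntegral ℤ α := by
  have h2 : IsIntegral ℤ (α ^ 2) := by
    refine ⟨Polynomial.X ^ 2 - Polynomial.C r * Polynomial.X + Polynomial.C s, ?_, ?_⟩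
    · monicity!
    · rw [Polynomial.eval₂_add, Polynomial.eval₂_sub, Polynomial.eval₂_mul, Polynomial.eval₂_C,
        Polynomial.eval₂_C, Polynomial.eval₂_X_pow, Polynomial.eval₂_X]
      simp only [algebraMap_int_eq, eq_intCast]
      linear_combination h
  exact IsIntegral.of_pow (n := 2) (by norm_num) h2

theorem not_root_unity (α β : ℂ) (p q : ℤ) (h1 : (α + β) ^ 2 = p) (h2 : α * β = q)
    (hq : q ≠ 0) (hm : ∀ m : ℤ, p = m * q → m < 0 ∨ 4 < m) :
    ¬ ∃ n : ℕ, 0 < n ∧ (α / β) ^ n = 1 := by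
  rintro ⟨n, hn, hz⟩
  have hqc : (q : ℂ) ≠ 0 := by exact_mod_cast hq
  have hab : α * β ≠ 0 := by rw [h2]; exact hqc
  have ha : α ≠ 0 := left_ne_zero_of_mul hab
  have hb : β ≠ 0 := right_ne_zero_of_mul hab
  have hz' : (β / α) ^ n = 1 := by
    rw [← inv_div, inv_pow, hz, inv_one]
  have key : α / β + β / α = (p : ℂ) / q - 2 := by
    rw [← h1, ← h2]; field_simp; ring
  have i1 : IsIntegral ℤ (α / β) := IsIntegral.of_pow hn (by rw [hz]; exact isIntegral_one)
  have i2 : IsIntegral ℤ (β / α) := IsIntegral.of_pow hn (by rw [hz']; exact isIntegral_one)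
  have i3 : IsIntegral ℤ (algebraMap ℚ ℂ ((p : ℚ) / q - 2)) := by
    have := i1.add i2
    rw [key] at this
    simpa using this
  have i4 : IsIntegral ℤ ((p : ℚ) / q - 2) :=
    (isIntegral_algebraMap_iff (algebraMap ℚ ℂ).injective).1 i3
  obtain ⟨t, ht⟩ := IsIntegrallyClosed.isIntegral_iff.1 i4
  have hqq : (q : ℚ) ≠ 0 := by exact_mod_cast hq
  have hp : p = (t + 2) * q := by
    have : (p : ℚ) = (t + 2) * q := by
      have e : (t : ℚ) = (p : ℚ) / q - 2 := by simpa using ht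
      rw [e]; field_simp; ring
    exact_mod_cast this
  have e1 : ‖α / β‖ = 1 := Complex.norm_eq_one_of_pow_eq_one hz hn.ne'
  have e2 : ‖β / α‖ = 1 := Complex.norm_eq_one_of_pow_eq_one hz' hn.ne'
  have e3 : α / β + β / α = (t : ℂ) := by
    rw [key, hp]; push_cast; field_simp; ring
  have e4 : ‖(t : ℂ)‖ ≤ 2 := by
    rw [← e3]; refine (norm_add_le _ _).trans ?_; rw [e1, e2]; norm_num
  rw [Complex.norm_intCast] at e4
  have e5 : |t| ≤ 2 := by exact_mod_cast e4
  have := abs_le.1 e5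
  rcases hm _ hp with h | h <;> omega

theorem main_aux (p q d : ℤ) (hd : p ^ 2 - 3 * p * q + q ^ 2 = d)
    (hd' : d = 1 ∨ d = -1 ∨ d = 5 ∨ d = -5)
    (hq : 2 ≤ q ∨ (q = 1 ∧ p = -1)) :
    IsDefective 5 (assocFst p (p - 4 * q)) (assocSnd p (p - 4 * q)) := by
  have hcop : IsCoprime p q := by
    rw [Int.isCoprime_iff_gcd_eq_one]
    obtain ⟨x, hx⟩ := Int.gcd_dvd_left p q
    obtain ⟨y, hy⟩ := Int.gcd_dvd_right p q
    generalize Int.gcd p q = g at *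
    have hg : (g : ℤ) ^ 2 * (x ^ 2 - 3 * x * y + y ^ 2) = d := by
      rw [← hd, hx, hy]; ring
    have hdv : ((g ^ 2 : ℕ) : ℤ) ∣ 5 := by
      push_cast
      rcases hd' with h | h | h | h
      · exact ⟨(x ^ 2 - 3 * x * y + y ^ 2) * 5, by rw [← mul_assoc, hg, h]; norm_num⟩
      · exact ⟨(x ^ 2 - 3 * x * y + y ^ 2) * (-5), by rw [← mul_assoc, hg, h]; norm_num⟩
      · exact ⟨(x ^ 2 - 3 * x * y + y ^ 2), by rw [hg, h]⟩
      · exact ⟨-(x ^ 2 - 3 * x * y + y ^ 2), by rw [mul_neg, hg, h]; norm_num⟩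
    have hdv2 : g ^ 2 ∣ 5 := by exact_mod_cast hdv
    rcases (Nat.dvd_prime Nat.prime_five).1 hdv2 with h | h
    · nlinarith [sq_nonneg (g : ℤ)]
    · have : g < 3 := by nlinarith
      interval_cases g <;> omega
  have hq0 : q ≠ 0 := by omega
  have hm : ∀ m : ℤ, p = m * q → m < 0 ∨ 4 < m := by
    intro m hpm
    rcases hq with h | ⟨h, h'⟩
    · have hu : IsUnit q := hcop.isUnit_of_dvd' ⟨m, by rw [hpm]; ring⟩ dvd_rfl
      rcases Int.isUnit_iff.1 hu with h | h <;> omega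
    · subst h; subst h'; omega
  have hp0 : p ≠ 0 := fun h => by have := hm 0 (by simpa using h); omega
  have hpq : p - 4 * q ≠ 0 := fun h => by have := hm 4 (by omega); omega
  have sa := csqrt_sq p
  have sb := csqrt_sq (p - 4 * q)
  unfold assocFst assocSnd
  generalize csqrt p = a at *
  generalize csqrt (p - 4 * q) = b at *
  push_cast at sb
  have h1 : ((a - b) / 2 + (a + b) / 2) ^ 2 = (p : ℂ) := by rw [← sa]; ring
  have h2 : ((a - b) / 2) * ((a + b) / 2) = (q : ℂ) := by
    linear_combination (1 / 4) * sa - (1 / 4) * sb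
  have ha0 : (a - b) / 2 + (a + b) / 2 ≠ 0 := by
    intro h; rw [h] at h1
    apply hp0
    have : (p : ℂ) = 0 := by rw [← h1]; norm_num
    exact_mod_cast this
  have hb0 : (a - b) / 2 - (a + b) / 2 ≠ 0 := by
    intro h
    apply hpq
    have : (p : ℂ) - 4 * q = 0 := by
      have hb : b = 0 := by linear_combination -h
      rw [← sb, hb]; norm_num
    exact_mod_cast this
  clear sa sb
  generalize (a - b) / 2 = α at *
  generalize (a + b) / 2 = β at *
  refine ⟨⟨?_, ?_, ⟨p, q, h1, h2, hp0, hq0, hcop⟩, not_root_unity α β p q h1 h2 hq0 hm⟩, ?_⟩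
  · apply int_of_quartic α (p - 2 * q) (q ^ 2)
    push_cast; rw [← h1, ← h2]; ring
  · apply int_of_quartic β (p - 2 * q) (q ^ 2)
    push_cast; rw [← h1, ← h2]; ring
  have hs0 : α ^ 2 - β ^ 2 ≠ 0 := by
    have : α ^ 2 - β ^ 2 = (α + β) * (α - β) := by ring
    rw [this]; exact mul_ne_zero ha0 hb0
  have u1 : lehmerU α β 1 = 1 := by
    rw [lehmerU, if_pos (by decide)]; field_simp
  have u2 : lehmerU α β 2 = 1 := by
    rw [lehmerU, if_neg (by decide)]; field_simp
  have u3 : lehmerU α β 3 = (p : ℂ) - q := by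
    rw [lehmerU, if_pos (by decide), div_eq_iff hb0, ← h1, ← h2]; ring
  have u4 : lehmerU α β 4 = (p : ℂ) - 2 * q := by
    rw [lehmerU, if_neg (by decide), div_eq_iff hs0, ← h1, ← h2]; ring
  have u5 : lehmerU α β 5 = (d : ℂ) := by
    rw [lehmerU, if_pos (by decide), div_eq_iff hb0, ← hd]; push_cast; rw [← h1, ← h2]; ring
  rintro l ⟨hl, ⟨m, hme, hlm⟩, hnot⟩
  rw [u5] at hme
  have hme' : m = d := by exact_mod_cast hme
  subst hme'
  have hl5 : l = 5 := by
    have h5 : (l : ℤ) ∣ 5 := by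
      rcases hd' with h | h | h | h <;> rw [h] at hlm
      · exact hlm.trans (by norm_num)
      · exact hlm.trans (by norm_num)
      · exact hlm
      · exact hlm.trans (by norm_num)
    have h5' : l ∣ 5 := by exact_mod_cast h5
    exact (Nat.prime_dvd_prime_iff_eq hl Nat.prime_five).1 h5'
  subst hl5
  apply hnot
  refine ⟨p * (p - 4 * q) * ((p - q) * (p - 2 * q)), ?_, ?_⟩
  · simp only [Finset.prod_Ico_succ_top (show 1 ≤ 4 by norm_num),
      Finset.prod_Ico_succ_top (show 1 ≤ 3 by norm_num),
      Finset.prod_Ico_succ_top (show 1 ≤ 2 by norm_num),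
      Finset.prod_Ico_succ_top (show 1 ≤ 1 by norm_num), Finset.Ico_self, Finset.prod_empty,
      u1, u2, u3, u4]
    push_cast; rw [← h1, ← h2]; ring
  · have hsq : (5 : ℤ) ∣ (p - 4 * q) ^ 2 := by
      obtain ⟨c, hc⟩ := hlm
      refine ⟨c - p * q + 3 * q ^ 2, ?_⟩
      push_cast at hc
      linear_combination hd + hc
    have h5 : (5 : ℤ) ∣ p - 4 * q := Int.Prime.dvd_pow' Nat.prime_five (by exact_mod_cast hsq)
    exact Dvd.dvd.mul_right (Dvd.dvd.mul_left (by exact_mod_cast h5) _) _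

theorem phi_det (n : ℕ) : phiAux (n + 1) ^ 2 - phiAux n * phiAux (n + 2) = 1 ∨
    phiAux (n + 1) ^ 2 - phiAux n * phiAux (n + 2) = -1 := by
  induction n with
  | zero => simp [phiAux]
  | succ n ih =>
    simp only [phiAux] at ih ⊢
    rcases ih with h | h
    · right; linear_combination -h
    · left; linear_combination -h

theorem psi_det (n : ℕ) : psiAux (n + 1) ^ 2 - psiAux n * psiAux (n + 2) = 5 ∨
    psiAux (n + 1) ^ 2 - psiAux n * psiAux (n + 2) = -5 := by
  induction n with
  | zero => simp [psiAux]
  | succ n ih =>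
    simp only [psiAux] at ih ⊢
    rcases ih with h | h
    · right; linear_combination -h
    · left; linear_combination -h

theorem phi_ge (n : ℕ) : 2 ≤ phiAux (n + 5) ∧ 2 ≤ phiAux (n + 6) := by
  induction n with
  | zero => simp [phiAux]
  | succ n ih =>
    refine ⟨ih.2, ?_⟩
    have : phiAux (n + 1 + 6) = phiAux (n + 6) + phiAux (n + 5) := rfl
    omega

theorem psi_ge (n : ℕ) : 2 ≤ psiAux (n + 4) ∧ 2 ≤ psiAux (n + 5) := by
  induction n with
  | zero => simp [psiAux]
  | succ n ih =>
    refine ⟨ih.2, ?_⟩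
    have : psiAux (n + 1 + 5) = psiAux (n + 5) + psiAux (n + 4) := rfl
    omega

theorem five_defective_families_are_defective :
    (∀ k ε : ℤ, (ε = 1 ∨ ε = -1) → 3 ≤ k →
      IsDefective 5 (assocFst (phi (k - 2 * ε)) (phi (k - 2 * ε) - 4 * phi k))
        (assocSnd (phi (k - 2 * ε)) (phi (k - 2 * ε) - 4 * phi k))) ∧
    (∀ k ε : ℤ, (ε = 1 ∨ ε = -1) → 0 ≤ k →
      ¬ ((k = 0 ∧ ε = -1) ∨ (k = 1 ∧ ε = -1)) →
      IsDefective 5 (assocFst (psi (k - 2 * ε)) (psi (k - 2 * ε) - 4 * psi k))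
        (assocSnd (psi (k - 2 * ε)) (psi (k - 2 * ε) - 4 * psi k))) := by
  constructor
  · intro k ε hε hk
    obtain ⟨n, rfl⟩ : ∃ n : ℕ, k = n + 3 := ⟨(k - 3).toNat, by omega⟩
    have hq : phi ((n : ℤ) + 3) = phiAux (n + 5) := by unfold phi; congr 1
    have hge := (phi_ge n).1
    rcases hε with rfl | rfl
    · have hp : phi ((n : ℤ) + 3 - 2 * 1) = phiAux (n + 3) := by unfold phi; congr 1; omega
      rw [hp, hq]
      refine main_aux _ _ _ rfl ?_ (Or.inl hge)
      have := phi_det (n + 3)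
      have e : phiAux (n + 5) = phiAux (n + 4) + phiAux (n + 3) := rfl
      have e2 : phiAux (n + 3) ^ 2 - 3 * phiAux (n + 3) * phiAux (n + 5) + phiAux (n + 5) ^ 2
        = phiAux (n + 4) ^ 2 - phiAux (n + 3) * phiAux (n + 5) := by rw [e]; ring
      rw [e2]
      rcases this with h | h
      · exact Or.inl h
      · exact Or.inr (Or.inl h)
    · have hp : phi ((n : ℤ) + 3 - 2 * (-1)) = phiAux (n + 7) := by unfold phi; congr 1
      rw [hp, hq]
      refine main_aux _ _ _ rfl ?_ (Or.inl hge)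
      have := phi_det (n + 5)
      have e : phiAux (n + 7) = phiAux (n + 6) + phiAux (n + 5) := rfl
      have e2 : phiAux (n + 7) ^ 2 - 3 * phiAux (n + 7) * phiAux (n + 5) + phiAux (n + 5) ^ 2
        = phiAux (n + 6) ^ 2 - phiAux (n + 5) * phiAux (n + 7) := by rw [e]; ring
      rw [e2]
      rcases this with h | h
      · exact Or.inl h
      · exact Or.inr (Or.inl h)
  · intro k ε hε hk hne
    obtain ⟨n, rfl⟩ : ∃ n : ℕ, k = n := ⟨k.toNat, by omega⟩
    have hq : psi (n : ℤ) = psiAux (n + 2) := by unfold psi; congr 1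
    have hge : n ≠ 1 → 2 ≤ psiAux (n + 2) := by
      intro h1
      rcases n with _ | _ | n
      · simp [psiAux]
      · omega
      · exact (psi_ge n).1
    rcases hε with rfl | rfl
    · have hp : psi ((n : ℤ) - 2 * 1) = psiAux n := by unfold psi; congr 1; omega
      rw [hp, hq]
      refine main_aux _ _ _ rfl ?_ ?_
      · have := psi_det n
        have e : psiAux (n + 2) = psiAux (n + 1) + psiAux n := rfl
        have e2 : psiAux n ^ 2 - 3 * psiAux n * psiAux (n + 2) + psiAux (n + 2) ^ 2
          = psiAux (n + 1) ^ 2 - psiAux n * psiAux (n + 2) := by rw [e]; ring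
        rw [e2]
        exact Or.inr (Or.inr this)
      · by_cases h1 : n = 1
        · subst h1; right; simp [psiAux]
        · exact Or.inl (hge h1)
    · have hp : psi ((n : ℤ) - 2 * (-1)) = psiAux (n + 4) := by unfold psi; congr 1
      rw [hp, hq]
      refine main_aux _ _ _ rfl ?_ (Or.inl (hge (by omega)))
      have := psi_det (n + 2)
      have e : psiAux (n + 4) = psiAux (n + 3) + psiAux (n + 2) := rfl
      have e2 : psiAux (n + 4) ^ 2 - 3 * psiAux (n + 4) * psiAux (n + 2) + psiAux (n + 2) ^ 2
        = psiAux (n + 3) ^ 2 - psiAux (n + 2) * psiAux (n + 4) := by rw [e]; ring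
      rw [e2]
      exact Or.inr (Or.inr this)
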